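/- Let A be an integrally closed residuated lattice. Then for all a, b ∈ A: a\b = e if and only if b/a = e. -/

import Mathlib

/-- A residuated lattice: a lattice-ordered monoid with left and right residuals,
i.e. `b ≤ a\c ↔ a*b ≤ c ↔ a ≤ c/b`.  `ldiv a c` denotes `a\c` and `rdiv c b` denotes `c/b`. -/
class ResiduatedLattice (α : Type*) extends Lattice α, Monoid α where
  ldiv : α → α → α
  rdiv : α → α → α
  le_ldiv_iff : ∀ a b c : α, b ≤ ldiv a c ↔ a * b ≤ c
  le_rdiv_iff : ∀ a b c : α, a ≤ rdiv c b ↔ a * b ≤ c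

open ResiduatedLattice

/-!
For residuals, integral closedness amounts to the self-dual condition that `x * x ≤ x` forces
`x ≤ 1`. It makes `x * y ≤ 1` symmetric in `x` and `y`: if `x * y ≤ 1`, then `y * x` squares below
itself. Now let `a\b = 1` and `r = 1/a`. Then `a * r ≤ 1` by symmetry, so `a * (r * b) ≤ b` and
`r * b ≤ 1`. Hence `y * a ≤ b` yields `r * y * a ≤ 1`, that is, `r * y ≤ r`, and so `y ≤ 1`.
-/

section ResiduatedOrderedMonoid

variable {M : Type*} [Monoid M]

theorem mul_le_one_swap_of_mul_self_le [Preorder M] [MulLeftMono M] [MulRightMono M]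
    (le_one_of_mul_self_le : ∀ x : M, x * x ≤ x → x ≤ 1) {x y : M} (hxy : x * y ≤ 1) :
    y * x ≤ 1 :=
  le_one_of_mul_self_le _ <| calc
    y * x * (y * x) = y * (x * y) * x := by simp only [mul_assoc]
    _ ≤ y * 1 * x := by gcongr
    _ = y * x := by rw [mul_one]

theorem le_one_of_mul_le_left_of_gc [Preorder M] [MulRightMono M]
    (le_one_of_mul_self_le : ∀ x : M, x * x ≤ x → x ≤ 1) {x y : M} {u : M → M}
    (gc : GaloisConnection (x * ·) u) (hxy : x * y ≤ x) : y ≤ 1 := by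
  have mul_self_le : u x * u x ≤ u x := gc.le_u <| calc
    x * (u x * u x) = x * u x * u x := (mul_assoc _ _ _).symm
    _ ≤ x * u x := mul_le_mul_left (gc.l_u_le x) (u x)
    _ ≤ x := gc.l_u_le x
  exact (gc.le_u hxy).trans (le_one_of_mul_self_le _ mul_self_le)

variable [PartialOrder M] {ldiv rdiv : M → M → M}

theorem rdiv_eq_one_of_ldiv_eq_one
    (gc_ldiv : ∀ a, GaloisConnection (a * ·) (ldiv a))
    (gc_rdiv : ∀ a, GaloisConnection (· * a) (rdiv · a))
    (le_one_of_mul_self_le : ∀ x : M, x * x ≤ x → x ≤ 1) {a b : M} (h : ldiv a b = 1) :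
    rdiv b a = 1 := by
  have : MulLeftMono M := ⟨fun a _ _ hxy => (gc_ldiv a).monotone_l hxy⟩
  have : MulRightMono M := ⟨fun a _ _ hxy => (gc_rdiv a).monotone_l hxy⟩
  have mul_le_iff (y : M) : a * y ≤ b ↔ y ≤ 1 := h ▸ gc_ldiv a y b
  have rdiv_mul_le (c : M) : rdiv c a * a ≤ c := (gc_rdiv a).l_u_le c
  apply le_antisymm
  · have mul_rdiv_le : a * rdiv 1 a ≤ 1 :=
      mul_le_one_swap_of_mul_self_le le_one_of_mul_self_le (rdiv_mul_le 1)
    have rdiv_mul_le_one : rdiv 1 a * b ≤ 1 := (mul_le_iff _).1 <| calc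
      a * (rdiv 1 a * b) = a * rdiv 1 a * b := (mul_assoc _ _ _).symm
      _ ≤ 1 * b := by gcongr
      _ = b := one_mul b
    have mul_rdiv_le_self : rdiv 1 a * rdiv b a ≤ rdiv 1 a := (gc_rdiv a).le_u <| calc
      rdiv 1 a * rdiv b a * a = rdiv 1 a * (rdiv b a * a) := mul_assoc _ _ _
      _ ≤ rdiv 1 a * b := by gcongr; exact rdiv_mul_le b
      _ ≤ 1 := rdiv_mul_le_one
    exact le_one_of_mul_le_left_of_gc le_one_of_mul_self_le (gc_ldiv _) mul_rdiv_le_self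
  · have le : a ≤ b := by simpa only [mul_one] using (mul_le_iff 1).2 le_rfl
    exact (gc_rdiv a).le_u ((one_mul a).trans_le le)

open MulOpposite in
theorem ldiv_eq_one_iff_rdiv_eq_one_general
    (gc_ldiv : ∀ a, GaloisConnection (a * ·) (ldiv a))
    (gc_rdiv : ∀ a, GaloisConnection (· * a) (rdiv · a))
    (le_one_of_mul_self_le : ∀ x : M, x * x ≤ x → x ≤ 1) (a b : M) :
    ldiv a b = 1 ↔ rdiv b a = 1 := by
  refine ⟨rdiv_eq_one_of_ldiv_eq_one gc_ldiv gc_rdiv le_one_of_mul_self_le, fun h => ?_⟩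
  -- Passing to `Mᵐᵒᵖ` exchanges the two residuals.
  exact op_injective <| rdiv_eq_one_of_ldiv_eq_one (M := Mᵐᵒᵖ)
    (ldiv := fun x z => op (rdiv z.unop x.unop)) (rdiv := fun z x => op (ldiv x.unop z.unop))
    (fun x y z => gc_rdiv x.unop y.unop z.unop) (fun x y z => gc_ldiv x.unop y.unop z.unop)
    (fun x => le_one_of_mul_self_le x.unop) (a := op a) (b := op b) (congrArg op h)

end ResiduatedOrderedMonoid

namespace ResiduatedLattice

variable {α : Type*} [ResiduatedLattice α]

theorem gc_mul_ldiv (a : α) : GaloisConnection (a * ·) (ldiv a) :=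
  fun b c => (le_ldiv_iff a b c).symm

theorem gc_mul_rdiv (a : α) : GaloisConnection (· * a) (rdiv · a) :=
  fun b c => (le_rdiv_iff b a c).symm

theorem le_one_of_mul_le_left {a b : α} (ldiv_self : ldiv a a = 1) (h : a * b ≤ a) : b ≤ 1 :=
  ldiv_self ▸ (le_ldiv_iff a b a).2 h

end ResiduatedLattice

/-- In an integrally closed residuated lattice, `a\b = e` iff `b/a = e`. -/
theorem ldiv_eq_one_iff_rdiv_eq_one {α : Type*} [ResiduatedLattice α]
    (hic : ∀ a : α, ldiv a a = 1 ∧ rdiv a a = 1) :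
    ∀ a b : α, ldiv a b = 1 ↔ rdiv b a = 1 :=
  ldiv_eq_one_iff_rdiv_eq_one_general gc_mul_ldiv gc_mul_rdiv
    fun a => le_one_of_mul_le_left (hic a).1
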